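/- Let γ : [0,1] → ℝ² be a closed piecewise cubic Bézier curve consisting of n segments, the k-th segment (1 ≤ k ≤ n) being the cubic Bézier curve with control points P_{k,0}, P_{k,1}, P_{k,2}, P_{k,3}, where P_{k,3} = P_{k+1,0} for k < n and P_{n,3} = P_{1,0}. Let z ∈ ℝ² be a point not belonging to the convex hull of {P_{k,0}, P_{k,1}, P_{k,2}, P_{k,3}} for any k. Then γ is homotopic, as a loop based at P_{1,0} within ℝ² \ {z}, to the closed polygon through the nodes P_{1,0}, P_{2,0}, …, P_{n,0}, P_{1,0} (the concatenation of the straight line segments between consecutive nodes); consequently γ and the nodal polygon have the same winding number about z. -/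

import Mathlib

open scoped BigOperators

/-- The cubic Bernstein polynomial `B_i(t) = C(3,i) t^i (1-t)^(3-i)`. -/
noncomputable def bern (i : ℕ) (t : ℝ) : ℝ :=
  (Nat.choose 3 i : ℝ) * t ^ i * (1 - t) ^ (3 - i)

lemma exists_piece (n : ℕ) [NeZero n] (t : ℝ) (ht : t ∈ Set.Icc (0:ℝ) 1) :
    ∃ k : Fin n, ∃ u ∈ Set.Icc (0:ℝ) 1, t = ((k : ℕ) + u) / n := by
  have hn : 0 < n := Nat.pos_of_ne_zero (NeZero.ne n)
  have hn' : (0:ℝ) < n := by exact_mod_cast hn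
  obtain ⟨h0, h1⟩ := ht
  rcases h1.lt_or_eq with h | h
  · have hnt : 0 ≤ (n:ℝ) * t := by positivity
    have hfl : ⌊(n:ℝ) * t⌋₊ < n := by
      rw [Nat.floor_lt hnt]
      nlinarith
    refine ⟨⟨⌊(n:ℝ) * t⌋₊, hfl⟩, n * t - ⌊(n:ℝ) * t⌋₊, ⟨?_, ?_⟩, ?_⟩
    · linarith [Nat.floor_le hnt]
    · linarith [Nat.lt_floor_add_one ((n:ℝ) * t)]
    · field_simp
      simp
  · refine ⟨⟨n - 1, by omega⟩, 1, ⟨by norm_num, le_refl _⟩, ?_⟩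
    have : ((n - 1 : ℕ) : ℝ) = n - 1 := by
      rw [Nat.cast_sub hn]; simp
    simp only [this]
    rw [h]
    field_simp
    ring

lemma piecewise_cont (n : ℕ) [NeZero n] (f : ℝ → ℝ × ℝ) (g : Fin n → ℝ → ℝ × ℝ)
    (hg : ∀ k, Continuous (g k))
    (h : ∀ k : Fin n, ∀ t ∈ Set.Icc (0:ℝ) 1, f (((k : ℕ) + t) / n) = g k t) :
    ContinuousOn f (Set.Icc (0:ℝ) 1) := by
  have hn : 0 < n := Nat.pos_of_ne_zero (NeZero.ne n)
  have hn' : (0:ℝ) < n := by exact_mod_cast hn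
  have key : ContinuousOn f
      (⋃ k : Fin n, (fun x : ℝ => (n:ℝ) * x - (k : ℕ)) ⁻¹' Set.Icc (0:ℝ) 1) := by
    apply LocallyFinite.continuousOn_iUnion (locallyFinite_of_finite _)
    · intro k
      exact isClosed_Icc.preimage (by fun_prop)
    · intro k
      have hc : Continuous fun x : ℝ => g k ((n:ℝ) * x - (k : ℕ)) :=
        (hg k).comp (by fun_prop)
      refine hc.continuousOn.congr ?_
      intro x hx
      have := h k _ hx
      beta_reduce at this ⊢
      rw [← this]
      congr 1
      field_simp
      ring
  refine key.mono ?_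
  intro t ht
  obtain ⟨k, u, hu, rfl⟩ := exists_piece n t ht
  refine Set.mem_iUnion.2 ⟨k, ?_⟩
  have : (n:ℝ) * ((((k : ℕ) : ℝ) + u) / n) - (k : ℕ) = u := by
    field_simp
    ring
  simpa only [Set.mem_preimage, this] using hu

/-- a closed piecewise cubic Bézier curve `γ` with `n` segments,
parametrized so that segment `k` occupies `[k/n, (k+1)/n]`, is homotopic as a loop
based at the first node, within `ℝ² \ {z}`, to the closed nodal polygon, whenever
`z` lies outside the convex hull of the control points of every segment.
(Consequently `γ` and the nodal polygon have the same winding number about `z`,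
loops that are homotopic in the punctured plane having equal winding numbers.) -/
theorem bezier_loop_homotopic_to_nodal_polygon (n : ℕ) [NeZero n]
    (P : Fin n → Fin 4 → ℝ × ℝ)
    (hclosed : ∀ k : Fin n, P k 3 = P (k + 1) 0)
    (γ : ℝ → ℝ × ℝ)
    (hγ : ∀ k : Fin n, ∀ t ∈ Set.Icc (0:ℝ) 1,
      γ (((k : ℕ) + t) / n) = ∑ i : Fin 4, bern i t • P k i)
    (poly : ℝ → ℝ × ℝ)
    (hpoly : ∀ k : Fin n, ∀ t ∈ Set.Icc (0:ℝ) 1,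
      poly (((k : ℕ) + t) / n) = (1 - t) • P k 0 + t • P (k + 1) 0)
    (z : ℝ × ℝ)
    (hz : ∀ k : Fin n, z ∉ convexHull ℝ (Set.range (P k))) :
    ∃ H : ℝ × ℝ → ℝ × ℝ,
      ContinuousOn H (Set.Icc (0:ℝ) 1 ×ˢ Set.Icc (0:ℝ) 1) ∧
      (∀ s ∈ Set.Icc (0:ℝ) 1, ∀ t ∈ Set.Icc (0:ℝ) 1, H (s, t) ≠ z) ∧
      (∀ t ∈ Set.Icc (0:ℝ) 1, H (0, t) = γ t) ∧
      (∀ t ∈ Set.Icc (0:ℝ) 1, H (1, t) = poly t) ∧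
      (∀ s ∈ Set.Icc (0:ℝ) 1, H (s, 0) = P 0 0 ∧ H (s, 1) = P 0 0) := by
  have hn : 0 < n := Nat.pos_of_ne_zero (NeZero.ne n)
  have hn' : (0:ℝ) < n := by exact_mod_cast hn
  have hγc : ContinuousOn γ (Set.Icc (0:ℝ) 1) := by
    refine piecewise_cont n γ (fun k t => ∑ i : Fin 4, bern i t • P k i) ?_ hγ
    intro k
    unfold bern
    fun_prop
  have hpc : ContinuousOn poly (Set.Icc (0:ℝ) 1) := by
    refine piecewise_cont n poly (fun k t => (1 - t) • P k 0 + t • P (k + 1) 0) ?_ hpoly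
    intro k
    fun_prop
  have z0 : (0:ℝ) ∈ Set.Icc (0:ℝ) 1 := by simp
  have z1 : (1:ℝ) ∈ Set.Icc (0:ℝ) 1 := by simp
  have hγ0 : γ 0 = P 0 0 := by
    have := hγ 0 0 z0
    simpa [bern, Fin.sum_univ_four] using this
  have hp0 : poly 0 = P 0 0 := by
    have := hpoly 0 0 z0
    simpa using this
  obtain ⟨l, hl, hl1⟩ : ∃ l : Fin n, (((l : ℕ) : ℝ) + 1) / n = 1 ∧ l + 1 = 0 := by
    obtain ⟨m, rfl⟩ : ∃ m, n = m + 1 := ⟨n - 1, by omega⟩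
    refine ⟨Fin.last m, ?_, Fin.last_add_one m⟩
    simp only [Fin.val_last]
    push_cast
    exact div_self (by positivity)
  have hγ1 : γ 1 = P 0 0 := by
    have := hγ l 1 z1
    rw [hl] at this
    rw [this, ← hl1, ← hclosed l]
    simp [bern, Fin.sum_univ_four]
  have hp1 : poly 1 = P 0 0 := by
    have := hpoly l 1 z1
    rw [hl] at this
    rw [this, hl1]
    simp
  refine ⟨fun p => (1 - p.1) • γ p.2 + p.1 • poly p.2, ?_, ?_, ?_, ?_, ?_⟩
  · have h2 : Set.MapsTo (Prod.snd : ℝ × ℝ → ℝ)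
        (Set.Icc (0:ℝ) 1 ×ˢ Set.Icc (0:ℝ) 1) (Set.Icc (0:ℝ) 1) := fun p hp => hp.2
    have a := hγc.comp continuous_snd.continuousOn h2
    have b := hpc.comp continuous_snd.continuousOn h2
    exact ((continuous_const.sub continuous_fst).continuousOn.smul a).add
      (continuous_fst.continuousOn.smul b)
  · intro s hs t ht hH
    obtain ⟨k, u, hu, rfl⟩ := exists_piece n t ht
    apply hz k
    rw [← hH]
    have hcv := convex_convexHull ℝ (Set.range (P k))
    have hm : ∀ i, P k i ∈ convexHull ℝ (Set.range (P k)) :=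
      fun i => subset_convexHull ℝ _ ⟨i, rfl⟩
    have hu' : 0 ≤ 1 - u := by linarith [hu.2]
    have hu0 : 0 ≤ u := hu.1
    refine hcv ?_ ?_ (by linarith [hs.2] : 0 ≤ 1 - s) hs.1 (by ring)
    · simp only [hγ k u hu]
      refine hcv.sum_mem ?_ ?_ (fun i _ => hm i)
      · intro i _
        unfold bern
        positivity
      · simp [bern, Fin.sum_univ_four, Nat.choose]
        ring
    · simp only [hpoly k u hu]
      rw [← hclosed k]
      exact hcv (hm 0) (hm 3) hu' hu0 (by ring)
  · intro t _
    simp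
  · intro t _
    simp
  · intro s _
    simp only [hγ0, hp0, hγ1, hp1, ← add_smul]
    simp
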